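/- arXiv:1801.08229 — 3 statements merged into one kernel-verified Lean document; each statement's English description precedes it below -/
import Mathlib

section
/- For every ψ ∈ F, the Monge–Ampère energy φ ↦ E(φ, ψ) is concave on F: for all φ₁, φ₂ ∈ F and all t ∈ [0,1], E(t·φ₁ + (1−t)·φ₂, ψ) ≥ t·E(φ₁, ψ) + (1−t)·E(φ₂, ψ). Equivalently (and consequently), for every ψ ∈ F the functional φ ↦ J_ψ(φ) is convex on F. -/
open Finset

/-- Abstract Monge–Ampère pairing setup with `n = m + 1`: a symmetric multilinear
form `B` on `W^(n+1) = W^(m+2)`, a unit element `one`, and a nonempty convex set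
`F ⊆ W`, satisfying (i) normalization `B(𝟙, φ₁, …, φₙ) = 1`, (ii) integration by
parts `B(u, 𝟙, g₂, …, gₙ) = 0` for `u ∈ W₀` and `gᵢ ∈ W' = span (F ∪ {𝟙})`, and
(iii) the Cauchy–Schwarz / local Hodge index inequality
`B(u, u, φ₁, …, φ_{n-1}) ≤ 0` for `u ∈ W₀`. -/
structure MASetup (m : ℕ) (W : Type*) [AddCommGroup W] [Module ℝ W] where
  B : MultilinearMap ℝ (fun _ : Fin (m + 2) => W) ℝ
  symm : ∀ (v : Fin (m + 2) → W) (σ : Equiv.Perm (Fin (m + 2))), B (v ∘ σ) = B v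
  one : W
  F : Set W
  Fne : F.Nonempty
  Fconv : Convex ℝ F
  unital : ∀ g : Fin (m + 1) → W, (∀ i, g i ∈ F) → B (Fin.cons one g) = 1
  parts : ∀ u ∈ Submodule.span ℝ ({x | ∃ φ ∈ F, ∃ ψ ∈ F, x = φ - ψ} ∪ {one}),
      ∀ g : Fin m → W, (∀ i, g i ∈ Submodule.span ℝ (F ∪ {one})) →
        B (Fin.cons u (Fin.cons one g)) = 0
  hodge : ∀ u ∈ Submodule.span ℝ ({x | ∃ φ ∈ F, ∃ ψ ∈ F, x = φ - ψ} ∪ {one}),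
      ∀ g : Fin m → W, (∀ i, g i ∈ F) → B (Fin.cons u (Fin.cons u g)) ≤ 0

namespace MASetup

variable {m : ℕ} {W : Type*} [AddCommGroup W] [Module ℝ W]

/-- The vector with `j` copies of `φ` followed by copies of `ψ`. -/
def mixVec (φ ψ : W) (j : ℕ) {k : ℕ} : Fin k → W := fun i => if (i : ℕ) < j then φ else ψ

/-- The linear span `W₀` of the differences of elements of `F` together with `one`. -/
def W0 (S : MASetup m W) : Submodule ℝ W :=
  Submodule.span ℝ ({x | ∃ φ ∈ S.F, ∃ ψ ∈ S.F, x = φ - ψ} ∪ {S.one})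

/-- The Monge–Ampère energy
`E(φ, ψ) = (n+1)⁻¹ ∑_{j=0}^{n} B(φ-ψ, φ, …, φ, ψ, …, ψ)` with `j` copies of `φ`
and `n - j` copies of `ψ` among the last `n` arguments. -/
noncomputable def energy (S : MASetup m W) (φ ψ : W) : ℝ :=
  ((m : ℝ) + 2)⁻¹ * ∑ j ∈ Finset.range (m + 2), S.B (Fin.cons (φ - ψ) (mixVec φ ψ j))

/-- The functional `I(φ, ψ) = B(φ-ψ, ψ, …, ψ) - B(φ-ψ, φ, …, φ)`. -/
noncomputable def Ifun (S : MASetup m W) (φ ψ : W) : ℝ :=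
  S.B (Fin.cons (φ - ψ) fun _ => ψ) - S.B (Fin.cons (φ - ψ) fun _ => φ)

/-- The functional `J_ψ(φ) = B(φ-ψ, ψ, …, ψ) - E(φ, ψ)`. -/
noncomputable def Jfun (S : MASetup m W) (ψ φ : W) : ℝ :=
  S.B (Fin.cons (φ - ψ) fun _ => ψ) - S.energy φ ψ

end MASetup

/-!
By symmetry, the sum defining `E(φ, ψ)` telescopes to `B(φ, …, φ) - B(ψ, …, ψ)`, so concavity of
the energy is concavity of the diagonal `φ ↦ B(φ, …, φ)`. For `φ, χ ∈ F`, the numbers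
`aⱼ = B(φ - χ, φ, …, φ, χ, …, χ)` (with `j` copies of `φ` after `φ - χ`) satisfy
`aⱼ₊₁ - aⱼ = B(φ - χ, φ - χ, φ, …, φ, χ, …, χ) ≤ 0`, so the telescoped sum is at most `(n + 1) a₀`:
the diagonal lies below the affine function `φ ↦ B(χ, …, χ) + (n + 1) B(φ - χ, χ, …, χ)`, which
agrees with it at `χ`. Having such a supergradient at every point of a convex set is concavity. -/

theorem concaveOn_of_exists_supergradient {𝕜 E β : Type*} [Semiring 𝕜] [PartialOrder 𝕜]
    [AddCommGroup E] [Module 𝕜 E] [AddCommMonoid β] [PartialOrder β] [IsOrderedAddMonoid β]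
    [Module 𝕜 β] [PosSMulMono 𝕜 β] {s : Set E} {f : E → β} (hs : Convex 𝕜 s)
    (hf : ∀ y ∈ s, ∃ L : E →ₗ[𝕜] β, ∀ x ∈ s, f x ≤ f y + L (x - y)) : ConcaveOn 𝕜 s f := by
  refine ⟨hs, fun x hx y hy a b ha hb hab => ?_⟩
  set z := a • x + b • y with hz
  obtain ⟨L, hL⟩ := hf z (hs hx hy ha hb hab)
  have barycenter : a • (x - z) + b • (y - z) = 0 := by
    rw [smul_sub, smul_sub, sub_add_sub_comm, ← add_smul, hab, one_smul, ← hz, sub_self]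
  calc
    a • f x + b • f y ≤ a • (f z + L (x - z)) + b • (f z + L (y - z)) := by
      gcongr
      exacts [hL x hx, hL y hy]
    _ = (a + b) • f z + L (a • (x - z) + b • (y - z)) := by
      rw [smul_add, smul_add, add_smul, map_add, map_smul, map_smul, add_add_add_comm]
    _ = f z := by rw [hab, one_smul, barycenter, map_zero, add_zero]

/-- A function of a family of arguments is *symmetric* if permuting the arguments does not change
its value. It is stated for bare functions, so that it applies to a multilinear map as well as to
its partial applications. -/
def PermInvariant {ι α β : Type*} (f : (ι → α) → β) : Prop :=
  ∀ (v : ι → α) (σ : Equiv.Perm ι), f (v ∘ σ) = f v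

theorem PermInvariant.cons {k : ℕ} {α β : Type*} {f : (Fin (k + 1) → α) → β}
    (hf : PermInvariant f) (u : α) : PermInvariant fun v : Fin k → α => f (Fin.cons u v) := by
  intro v σ
  have cons_comp : (Fin.cons u (v ∘ σ) : Fin (k + 1) → α) =
      Fin.cons u v ∘ Equiv.Perm.decomposeFin.symm (0, σ) := by
    funext i
    cases i using Fin.cases <;> simp
  exact (congrArg f cons_comp).trans (hf _ _)

namespace MASetup

variable {W : Type*}

theorem mixVec_zero (φ ψ : W) (k : ℕ) : (mixVec φ ψ 0 : Fin k → W) = fun _ => ψ := by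
  funext i
  simp [mixVec]

theorem mixVec_self (φ ψ : W) (k : ℕ) : (mixVec φ ψ k : Fin k → W) = fun _ => φ := by
  funext i
  simp [mixVec]

theorem mixVec_mem {F : Set W} {φ ψ : W} (hφ : φ ∈ F) (hψ : ψ ∈ F) (j : ℕ) {k : ℕ} (i : Fin k) :
    mixVec φ ψ j i ∈ F := by
  unfold mixVec
  split_ifs <;> assumption

theorem cons_mixVec_left (φ ψ : W) (j k : ℕ) :
    (Fin.cons φ (mixVec φ ψ j : Fin k → W) : Fin (k + 1) → W) = mixVec φ ψ (j + 1) := by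
  funext i
  cases i using Fin.cases <;> simp [mixVec]

theorem cons_mixVec_right (φ ψ : W) {j k : ℕ} (hj : j < k + 1) :
    (Fin.cons ψ (mixVec φ ψ j : Fin k → W) : Fin (k + 1) → W) =
      mixVec φ ψ j ∘ Equiv.swap 0 ⟨j, hj⟩ := by
  funext i
  cases i using Fin.cases with
  | zero => simp [mixVec]
  | succ i =>
    simp only [Fin.cons_succ, Function.comp_apply, mixVec, Equiv.swap_apply_def, Fin.ext_iff]
    grind

end MASetup

namespace MongeAmpere

open MASetup

section Telescoping

variable {R W N : Type*} [Semiring R] [AddCommGroup W] [Module R W] [AddCommGroup N] [Module R N]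
  {k : ℕ}

/-- A multilinear map as a linear function of its first argument, the others being fixed to `v`:
the mixed Monge–Ampère measure of `v`, integrated against a variable function. -/
def consLinearMap (B : MultilinearMap R (fun _ : Fin (k + 1) => W) N) (v : Fin k → W) :
    W →ₗ[R] N where
  toFun u := B (Fin.cons u v)
  map_add' := B.cons_add v
  map_smul' := B.cons_smul v

variable {B : MultilinearMap R (fun _ : Fin (k + 1) => W) N}

theorem map_cons_sub_mixVec (hB : PermInvariant B) (φ ψ : W) {j : ℕ} (hj : j < k + 1) :
    B (Fin.cons (φ - ψ) (mixVec φ ψ j)) = B (mixVec φ ψ (j + 1)) - B (mixVec φ ψ j) :=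
  calc
    B (Fin.cons (φ - ψ) (mixVec φ ψ j))
        = B (Fin.cons φ (mixVec φ ψ j)) - B (Fin.cons ψ (mixVec φ ψ j)) :=
      map_sub (consLinearMap B _) φ ψ
    _ = B (mixVec φ ψ (j + 1)) - B (mixVec φ ψ j) := by
      rw [cons_mixVec_left, cons_mixVec_right φ ψ hj, hB]

theorem sum_map_cons_sub_mixVec (hB : PermInvariant B) (φ ψ : W) :
    ∑ j ∈ range (k + 1), B (Fin.cons (φ - ψ) (mixVec φ ψ j)) =
      B (fun _ => φ) - B (fun _ => ψ) := by
  rw [sum_congr rfl fun j hj => map_cons_sub_mixVec hB φ ψ (mem_range.1 hj),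
    sum_range_sub fun j => B (mixVec φ ψ j), mixVec_self, mixVec_zero]

end Telescoping

section Diagonal

variable {R W N : Type*} [CommSemiring R] [AddCommGroup W] [Module R W] [AddCommGroup N]
  [PartialOrder N] [IsOrderedAddMonoid N] [Module R N] {m : ℕ}
  {B : MultilinearMap R (fun _ : Fin (m + 2) => W) N}

theorem antitoneOn_map_cons_sub_mixVec (hB : PermInvariant B) {φ χ : W}
    (hodge : ∀ j ≤ m, B (Fin.cons (φ - χ) (Fin.cons (φ - χ) (mixVec φ χ j))) ≤ 0) :
    AntitoneOn (fun j => B (Fin.cons (φ - χ) (mixVec φ χ j))) (Set.Iic (m + 1)) := by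
  refine antitoneOn_of_add_one_le Set.ordConnected_Iic fun j _ _ hj => sub_nonpos.1 ?_
  have difference : B (Fin.cons (φ - χ) (Fin.cons (φ - χ) (mixVec φ χ j))) =
      B (Fin.cons (φ - χ) (mixVec φ χ (j + 1))) - B (Fin.cons (φ - χ) (mixVec φ χ j)) :=
    map_cons_sub_mixVec (B := B.curryLeft (φ - χ)) (hB.cons _) φ χ hj
  exact difference.symm.trans_le (hodge j (Nat.succ_le_succ_iff.1 hj))

theorem map_diagonal_le (hB : PermInvariant B) {φ χ : W}
    (hodge : ∀ j ≤ m, B (Fin.cons (φ - χ) (Fin.cons (φ - χ) (mixVec φ χ j))) ≤ 0) :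
    B (fun _ => φ) ≤ B (fun _ => χ) + (m + 2) • B (Fin.cons (φ - χ) fun _ => χ) := by
  have term_le : ∀ j ∈ range (m + 2),
      B (Fin.cons (φ - χ) (mixVec φ χ j)) ≤ B (Fin.cons (φ - χ) fun _ => χ) := fun j hj => by
    simpa only [mixVec_zero] using antitoneOn_map_cons_sub_mixVec hB hodge (Nat.zero_le _)
      (Nat.lt_succ_iff.1 (mem_range.1 hj)) (Nat.zero_le j)
  rw [← sub_le_iff_le_add', ← sum_map_cons_sub_mixVec hB]
  simpa only [card_range] using sum_le_card_nsmul _ _ _ term_le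

theorem concaveOn_map_diagonal [PartialOrder R] [PosSMulMono R N] (hB : PermInvariant B)
    {F : Set W} (hF : Convex R F)
    (hodge : ∀ φ ∈ F, ∀ χ ∈ F, ∀ g : Fin m → W, (∀ i, g i ∈ F) →
      B (Fin.cons (φ - χ) (Fin.cons (φ - χ) g)) ≤ 0) :
    ConcaveOn R F fun φ => B fun _ => φ :=
  concaveOn_of_exists_supergradient hF fun χ hχ =>
    ⟨(m + 2) • consLinearMap B fun _ => χ, fun φ hφ =>
      map_diagonal_le hB fun j _ => hodge φ hφ χ hχ _ (mixVec_mem hφ hχ j)⟩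

end Diagonal

theorem convexOn_map_cons_sub {𝕜 W N : Type*} [Semiring 𝕜] [PartialOrder 𝕜] [AddCommGroup W]
    [Module 𝕜 W] [AddCommGroup N] [PartialOrder N] [IsOrderedAddMonoid N] [Module 𝕜 N] {k : ℕ}
    (B : MultilinearMap 𝕜 (fun _ : Fin (k + 1) => W) N) {F : Set W} (hF : Convex 𝕜 F) (ψ : W)
    (v : Fin k → W) : ConvexOn 𝕜 F fun φ => B (Fin.cons (φ - ψ) v) := by
  have affine : (fun φ => B (Fin.cons (φ - ψ) v)) =
      fun φ => consLinearMap B v φ + -consLinearMap B v ψ :=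
    funext fun φ => (map_sub (consLinearMap B v) φ ψ).trans (sub_eq_add_neg _ _)
  rw [affine]
  exact ((consLinearMap B v).convexOn hF).add_const _

section Energy

variable {𝕜 W N : Type*} [Field 𝕜] [AddCommGroup W] [Module 𝕜 W] [AddCommGroup N] [Module 𝕜 N]
  {m : ℕ}

/-- The Monge–Ampère energy `E(φ, ψ)` of an arbitrary multilinear map in `n + 1 = m + 2`
variables, which for `B = S.B` is `S.energy φ ψ`. -/
def energy (B : MultilinearMap 𝕜 (fun _ : Fin (m + 2) => W) N) (φ ψ : W) : N :=
  ((m : 𝕜) + 2)⁻¹ • ∑ j ∈ range (m + 2), B (Fin.cons (φ - ψ) (mixVec φ ψ j))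

variable {B : MultilinearMap 𝕜 (fun _ : Fin (m + 2) => W) N}

theorem energy_eq_smul_diagonal_sub (hB : PermInvariant B) (φ ψ : W) :
    energy B φ ψ = ((m : 𝕜) + 2)⁻¹ • (B (fun _ => φ) - B fun _ => ψ) :=
  congrArg _ (sum_map_cons_sub_mixVec hB φ ψ)

variable [LinearOrder 𝕜] [IsStrictOrderedRing 𝕜] [PartialOrder N] [IsOrderedAddMonoid N]
  [PosSMulMono 𝕜 N]

theorem concaveOn_energy (hB : PermInvariant B) {F : Set W} (hF : Convex 𝕜 F)
    (hodge : ∀ φ ∈ F, ∀ χ ∈ F, ∀ g : Fin m → W, (∀ i, g i ∈ F) →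
      B (Fin.cons (φ - χ) (Fin.cons (φ - χ) g)) ≤ 0) (ψ : W) :
    ConcaveOn 𝕜 F fun φ => energy B φ ψ := by
  simp only [energy_eq_smul_diagonal_sub hB, sub_eq_add_neg]
  exact ((concaveOn_map_diagonal hB hF hodge).add_const _).smul (by positivity)

end Energy

end MongeAmpere

theorem energy_concave_general {𝕜 W N : Type*} [Field 𝕜] [LinearOrder 𝕜] [IsStrictOrderedRing 𝕜]
    [AddCommGroup W] [Module 𝕜 W] [AddCommGroup N] [PartialOrder N] [IsOrderedAddMonoid N]
    [Module 𝕜 N] [PosSMulMono 𝕜 N] {m : ℕ} {B : MultilinearMap 𝕜 (fun _ : Fin (m + 2) => W) N}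
    (hB : PermInvariant B) {F : Set W} (hF : Convex 𝕜 F)
    (hodge : ∀ φ ∈ F, ∀ χ ∈ F, ∀ g : Fin m → W, (∀ i, g i ∈ F) →
      B (Fin.cons (φ - χ) (Fin.cons (φ - χ) g)) ≤ 0) (ψ : W) :
    ConcaveOn 𝕜 F (fun φ => MongeAmpere.energy B φ ψ) ∧
      ConvexOn 𝕜 F fun φ => B (Fin.cons (φ - ψ) fun _ => ψ) - MongeAmpere.energy B φ ψ :=
  have concave := MongeAmpere.concaveOn_energy hB hF hodge ψ
  ⟨concave, (MongeAmpere.convexOn_map_cons_sub B hF ψ _).sub concave⟩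

/-- for every `ψ ∈ F`, the energy `φ ↦ E(φ, ψ)` is concave on `F`;
equivalently, `φ ↦ J_ψ(φ)` is convex on `F`. -/
theorem energy_concave {m : ℕ} {W : Type*} [AddCommGroup W] [Module ℝ W]
    (S : MASetup m W) {ψ : W} (hψ : ψ ∈ S.F) :
    (∀ φ₁ ∈ S.F, ∀ φ₂ ∈ S.F, ∀ t ∈ Set.Icc (0 : ℝ) 1,
        t * S.energy φ₁ ψ + (1 - t) * S.energy φ₂ ψ ≤
          S.energy (t • φ₁ + (1 - t) • φ₂) ψ) ∧
      ∀ φ₁ ∈ S.F, ∀ φ₂ ∈ S.F, ∀ t ∈ Set.Icc (0 : ℝ) 1,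
        S.Jfun ψ (t • φ₁ + (1 - t) • φ₂) ≤ t * S.Jfun ψ φ₁ + (1 - t) * S.Jfun ψ φ₂ := by
  obtain ⟨concave, convex⟩ := energy_concave_general S.symm S.Fconv (fun φ hφ χ hχ =>
    S.hodge (φ - χ) (Submodule.subset_span (Or.inl ⟨φ, hφ, χ, hχ, rfl⟩))) ψ
  exact ⟨fun _ h₁ _ h₂ t ht => concave.2 h₁ h₂ ht.1 (sub_nonneg.2 ht.2) (add_sub_cancel t 1),
    fun _ h₁ _ h₂ t ht => convex.2 h₁ h₂ ht.1 (sub_nonneg.2 ht.2) (add_sub_cancel t 1)⟩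
end

section
/- For all φ, ψ ∈ F and all t ∈ [0,1], one has I(t·φ + (1−t)·ψ, ψ) ≤ n·t²·I(φ, ψ). -/
open Finset

/-!
Fix `u = φ - ψ` and let `G` be the form `B(u, ·, …, ·)` in the remaining `n` variables. By the
Hodge index inequality, replacing a `ψ` by `φ = ψ + u` in any slot of `G` can only decrease its
value, so every mixed term `G(φ or ψ, …, φ or ψ)` is at least `G(φ, …, φ)`. Expanding `G` at
`χ = tφ + (1-t)ψ` by multilinearity writes `G(χ, …, χ)` as a binomial average of mixed terms, in
which `G(ψ, …, ψ)` has weight `(1-t)ⁿ`; hence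
`G(ψ, …, ψ) - G(χ, …, χ) ≤ (1 - (1-t)ⁿ) (G(ψ, …, ψ) - G(φ, …, φ))`, and `1 - (1-t)ⁿ ≤ nt` by
Bernoulli. The second factor `t` comes from `χ - ψ = tu`.
-/

section Multilinear

variable {𝕜 ι N : Type*} {M : ι → Type*} [DecidableEq ι]

lemma antitone_map_piecewise [Ring 𝕜] [∀ i, AddCommGroup (M i)] [∀ i, Module 𝕜 (M i)]
    [AddCommGroup N] [PartialOrder N] [IsOrderedAddMonoid N] [Module 𝕜 N]
    (G : MultilinearMap 𝕜 M N) {w v : ∀ i, M i}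
    (hG : ∀ (s : Finset ι), ∀ i ∉ s, G (Function.update (s.piecewise w v) i (w i - v i)) ≤ 0) :
    Antitone fun s : Finset ι => G (s.piecewise w v) := by
  refine antitone_iff_forall_insert_le.2 fun s i hi => ?_
  have update_eq_self : Function.update (s.piecewise w v) i (v i) = s.piecewise w v := by
    rw [Function.update_eq_self_iff, s.piecewise_eq_of_notMem w v hi]
  rw [← sub_nonpos]
  calc G ((insert i s).piecewise w v) - G (s.piecewise w v)
      = G (Function.update (s.piecewise w v) i (w i - v i)) := by
        rw [G.map_update_sub, update_eq_self, piecewise_insert]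
    _ ≤ 0 := hG s i hi

variable [Fintype ι]

lemma map_smul_add_smul_eq_sum_piecewise [CommSemiring 𝕜] [∀ i, AddCommMonoid (M i)]
    [∀ i, Module 𝕜 (M i)] [AddCommMonoid N] [Module 𝕜 N]
    (G : MultilinearMap 𝕜 M N) (a b : 𝕜) (w v : ∀ i, M i) :
    G (a • w + b • v) =
      ∑ s : Finset ι, (a ^ #s * b ^ (Fintype.card ι - #s)) • G (s.piecewise w v) := by
  rw [G.map_add_univ]
  refine sum_congr rfl fun s _ => ?_
  have factor_out : s.piecewise (a • w) (b • v) =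
      fun i => s.piecewise (fun _ => a) (fun _ => b) i • s.piecewise w v i := by
    ext i
    by_cases hi : i ∈ s <;> simp [hi]
  rw [factor_out, G.map_smul_univ, prod_piecewise]
  simp [← compl_eq_univ_sdiff, card_compl]

variable [CommRing 𝕜] [∀ i, AddCommGroup (M i)] [∀ i, Module 𝕜 (M i)]

lemma map_sub_map_segment_le_one_sub_pow_mul [PartialOrder 𝕜] [IsOrderedRing 𝕜]
    (G : MultilinearMap 𝕜 M 𝕜) {w v : ∀ i, M i} (hG : ∀ s : Finset ι, G w ≤ G (s.piecewise w v))
    {t : 𝕜} (ht : t ∈ Set.Icc 0 1) :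
    G v - G (t • w + (1 - t) • v) ≤ (1 - (1 - t) ^ Fintype.card ι) * (G v - G w) := by
  have ht' : 0 ≤ 1 - t := sub_nonneg.2 ht.2
  let weight (s : Finset ι) : 𝕜 := t ^ #s * (1 - t) ^ (Fintype.card ι - #s)
  have weight_nonneg (s : Finset ι) : 0 ≤ weight s :=
    mul_nonneg (pow_nonneg ht.1 _) (pow_nonneg ht' _)
  have sum_weight : ∑ s, weight s = 1 := by
    simp [weight, Fintype.sum_pow_mul_eq_add_pow]
  have expansion : G (t • w + (1 - t) • v) - G w =
      ∑ s, weight s * (G (s.piecewise w v) - G w) := by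
    simp only [map_smul_add_smul_eq_sum_piecewise, mul_sub, sum_sub_distrib, ← sum_mul,
      sum_weight, one_mul, smul_eq_mul, weight]
  have empty_term_le : (1 - t) ^ Fintype.card ι * (G v - G w) ≤
      G (t • w + (1 - t) • v) - G w := by
    rw [expansion]
    simpa [weight] using single_le_sum
      (fun s _ => mul_nonneg (weight_nonneg s) (sub_nonneg.2 (hG s))) (mem_univ ∅)
  linear_combination empty_term_le

lemma map_sub_map_segment_le_card_mul [LinearOrder 𝕜] [IsStrictOrderedRing 𝕜]
    (G : MultilinearMap 𝕜 M 𝕜) {w v : ∀ i, M i} (hG : ∀ s : Finset ι, G w ≤ G (s.piecewise w v))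
    {t : 𝕜} (ht : t ∈ Set.Icc 0 1) :
    G v - G (t • w + (1 - t) • v) ≤ Fintype.card ι * t * (G v - G w) := by
  have bernoulli : 1 - (1 - t) ^ Fintype.card ι ≤ Fintype.card ι * t := by
    linear_combination
      one_add_mul_sub_le_pow (show -1 ≤ 1 - t by linarith [ht.2]) (Fintype.card ι)
  have drop_nonneg : 0 ≤ G v - G w := by simpa using hG ∅
  exact (map_sub_map_segment_le_one_sub_pow_mul G hG ht).trans
    (mul_le_mul_of_nonneg_right bernoulli drop_nonneg)

end Multilinear

section AubinI

variable {𝕜 W : Type*} [CommRing 𝕜] [AddCommGroup W] [Module 𝕜 W] {n : ℕ}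

/-- Aubin's functional `I(φ, ψ) = B(φ-ψ, ψ, …, ψ) - B(φ-ψ, φ, …, φ)` of an arbitrary multilinear
form `B` in `n + 1` variables, of which `MASetup.Ifun` is the case of a Monge–Ampère pairing. -/
def aubinI (B : MultilinearMap 𝕜 (fun _ : Fin (n + 1) => W) 𝕜) (φ ψ : W) : 𝕜 :=
  B (Fin.cons (φ - ψ) fun _ => ψ) - B (Fin.cons (φ - ψ) fun _ => φ)

lemma aubinI_segment_eq (B : MultilinearMap 𝕜 (fun _ : Fin (n + 1) => W) 𝕜) (φ ψ : W) (t : 𝕜) :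
    aubinI B (t • φ + (1 - t) • ψ) ψ = t * (B.curryLeft (φ - ψ) (fun _ => ψ) -
      B.curryLeft (φ - ψ) (t • (fun _ => φ) + (1 - t) • fun _ => ψ)) := by
  have segment_sub : t • φ + (1 - t) • ψ - ψ = t • (φ - ψ) := by module
  rw [aubinI, segment_sub, B.cons_smul, B.cons_smul, ← smul_sub]
  rfl

theorem Ifun_segment_general [LinearOrder 𝕜] [IsStrictOrderedRing 𝕜]
    (B : MultilinearMap 𝕜 (fun _ : Fin (n + 1) => W) 𝕜) {φ ψ : W}
    (hB : ∀ v : Fin n → W, (∀ i, v i ∈ ({φ, ψ} : Set W)) →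
      ∀ i, B (Fin.cons (φ - ψ) (Function.update v i (φ - ψ))) ≤ 0)
    {t : 𝕜} (ht : t ∈ Set.Icc 0 1) :
    aubinI B (t • φ + (1 - t) • ψ) ψ ≤ n * t ^ 2 * aubinI B φ ψ := by
  let G := B.curryLeft (φ - ψ)
  have mixed_antitone :
      Antitone fun s : Finset (Fin n) => G (s.piecewise (fun _ => φ) fun _ => ψ) :=
    antitone_map_piecewise G fun s i _ =>
      hB _ (fun j => by by_cases hj : j ∈ s <;> simp [hj]) i
  have map_le_mixed (s : Finset (Fin n)) :
      G (fun _ => φ) ≤ G (s.piecewise (fun _ => φ) fun _ => ψ) := by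
    simpa using mixed_antitone (subset_univ s)
  have drop_le := map_sub_map_segment_le_card_mul G map_le_mixed ht
  rw [Fintype.card_fin] at drop_le
  calc aubinI B (t • φ + (1 - t) • ψ) ψ
      = t * (G (fun _ => ψ) - G (t • (fun _ => φ) + (1 - t) • fun _ => ψ)) :=
        aubinI_segment_eq B φ ψ t
    _ ≤ t * (n * t * (G (fun _ => ψ) - G fun _ => φ)) := mul_le_mul_of_nonneg_left drop_le ht.1
    _ = n * t ^ 2 * (G (fun _ => ψ) - G fun _ => φ) := by ring

end AubinI

lemma apply_cons_insertNth_of_symm {α β : Type*} {m : ℕ} {f : (Fin (m + 2) → α) → β}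
    (hf : ∀ (v : Fin (m + 2) → α) (σ : Equiv.Perm (Fin (m + 2))), f (v ∘ σ) = f v)
    (a b : α) (i : Fin (m + 1)) (g : Fin m → α) :
    f (Fin.cons a (i.insertNth b g : Fin (m + 1) → α)) = f (Fin.cons b (Fin.cons a g)) := by
  rw [← Fin.insertNth_succ_cons, ← Fin.cons_comp_cycleRange, hf]

namespace MASetup

variable {m : ℕ} {W : Type*} [AddCommGroup W] [Module ℝ W]

lemma map_cons_update_nonpos (S : MASetup m W) {u : W} (hu : u ∈ S.W0)
    {v : Fin (m + 1) → W} (hv : ∀ i, v i ∈ S.F) (i : Fin (m + 1)) :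
    S.B (Fin.cons u (Function.update v i u)) ≤ 0 := by
  rw [← Fin.insertNth_removeNth, apply_cons_insertNth_of_symm S.symm]
  exact S.hodge u hu (i.removeNth v) fun _ => hv _

lemma sub_mem_W0 (S : MASetup m W) {φ ψ : W} (hφ : φ ∈ S.F) (hψ : ψ ∈ S.F) :
    φ - ψ ∈ S.W0 :=
  Submodule.subset_span (Or.inl ⟨φ, hφ, ψ, hψ, rfl⟩)

end MASetup

/-- `I(tφ + (1-t)ψ, ψ) ≤ n t² I(φ, ψ)` for `t ∈ [0,1]`, `n = m+1`. -/
theorem Ifun_segment {m : ℕ} {W : Type*} [AddCommGroup W] [Module ℝ W]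
    (S : MASetup m W) {φ ψ : W} (hφ : φ ∈ S.F) (hψ : ψ ∈ S.F)
    {t : ℝ} (ht : t ∈ Set.Icc (0 : ℝ) 1) :
    S.Ifun (t • φ + (1 - t) • ψ) ψ ≤ ((m : ℝ) + 1) * t ^ 2 * S.Ifun φ ψ := by
  exact_mod_cast Ifun_segment_general S.B (fun v hv => S.map_cons_update_nonpos
    (S.sub_mem_W0 hφ hψ) fun i => Set.pair_subset hφ hψ (hv i)) ht
end

section
/- There exists a constant C > 0 depending only on n such that, for every abstract Monge–Ampère pairing setup (W, B, 𝟙, F) as in the context, every choice of reference element φ_ref ∈ F, and all φ, ψ ∈ F: I(φ, ψ) ≤ C · max{J(φ), J(ψ)}. -/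
open Finset

/-!
Write `⟨x, y⟩_g = -B(x, y, g₁, …, gₘ)`, a positive semidefinite form on the span of the differences
of elements of `F`, and let `χ = φ_ref`, `x = φ - χ`, `y = ψ - χ`. If every `gᵢ` is `φ` or `χ`, then
`⟨x, x⟩_g ≤ I(φ, χ) ≤ (m + 2) J_χ(φ)`, because `h ↦ B(x, h)` decreases when an entry `χ` of `h` is
replaced by `φ`; similarly for `y`. Let `M` bound these quantities and let `X` be the maximum of
`⟨x, x⟩_g` and `⟨y, y⟩_g` over all `g` with entries in `{φ, ψ, χ}`.

By symmetry of `B`, changing an entry `ψ` of `g` to `χ` changes `⟨x, x⟩_g` only by the cross terms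
`⟨x, y⟩` at `g` with that entry changed to `φ` or `χ`. By Cauchy–Schwarz, `⟨x, x⟩_g ^ 2 ≤ 9 X P`,
where `P` is the larger of the two new values of `⟨x, x⟩`. Eliminating all `k` entries `ψ` gives
`(⟨x, x⟩_g / 9X) ^ (2 ^ k) ≤ M / 9X`. At a `g` where the maximum `X` is attained this is a bound
`X ≤ 9 ^ (2 ^ m) M`, and `I(φ, ψ)` is a sum of `m + 1` values `⟨x - y, x - y⟩_g ≤ 4 X`.
-/

section HodgeIndex

open Function

lemma apply_const_le_add_card_nsmul {ι α R : Type*} [Fintype ι] [DecidableEq ι] [AddCommMonoid R]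
    [PartialOrder R] [IsOrderedAddMonoid R] {f : (ι → α) → R} {s : Set α} {b : α} {δ : R}
    (hb : b ∈ s) (hf : ∀ h : ι → α, (∀ i, h i ∈ s) → ∀ i, f (update h i b) ≤ f h + δ)
    {h : ι → α} (hh : ∀ i, h i ∈ s) :
    f (fun _ => b) ≤ f h + Fintype.card ι • δ := by
  suffices H : ∀ t : Finset ι, f (t.piecewise (fun _ => b) h) ≤ f h + #t • δ by
    simpa only [piecewise_univ, card_univ] using H univ
  intro t
  induction t using Finset.induction with
  | empty => simp
  | insert i t hi ih =>
    have hmem : ∀ j, t.piecewise (fun _ => b) h j ∈ s := fun j =>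
      t.piecewise_cases _ h (· ∈ s) hb (hh j)
    calc f ((insert i t).piecewise (fun _ => b) h)
        = f (update (t.piecewise (fun _ => b) h) i b) := by rw [piecewise_insert]
      _ ≤ f (t.piecewise (fun _ => b) h) + δ := hf _ hmem i
      _ ≤ f h + #t • δ + δ := by gcongr
      _ = f h + #(insert i t) • δ := by rw [card_insert_of_notMem hi, succ_nsmul, add_assoc]

section DirichletForm

variable {𝕜 : Type*} [Field 𝕜] {W : Type*} [AddCommGroup W] [Module 𝕜 W] {m : ℕ}

/-- The mixed Dirichlet form `(x, y) ↦ -B(x, y, g₁, …, gₘ)`, which models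
`V⁻¹ ∫ dx ∧ dᶜy ∧ ddᶜg₁ ∧ ⋯ ∧ ddᶜgₘ`; the sign makes it positive semidefinite under the Hodge
index inequality. -/
def dirichletForm (B : MultilinearMap 𝕜 (fun _ : Fin (m + 2) => W) 𝕜) (g : Fin m → W) :
    LinearMap.BilinForm 𝕜 W :=
  LinearMap.mk₂ 𝕜 (fun x y => -B (Fin.cons x (Fin.cons y g)))
    (fun x x' y => by rw [B.cons_add, neg_add])
    (fun c x y => by rw [B.cons_smul, smul_neg])
    (fun x y y' => by
      simpa only [MultilinearMap.curryLeft_apply, neg_add] using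
        congrArg Neg.neg ((B.curryLeft x).cons_add g y y'))
    (fun c x y => by
      simpa only [MultilinearMap.curryLeft_apply, smul_neg] using
        congrArg Neg.neg ((B.curryLeft x).cons_smul g c y))

/-- The functional `I(φ, ψ) = B(φ-ψ, ψ, …, ψ) - B(φ-ψ, φ, …, φ)` of a multilinear form; for the
form of an `MASetup` it is `MASetup.Ifun`. -/
def mongeAmpereI (B : MultilinearMap 𝕜 (fun _ : Fin (m + 2) => W) 𝕜) (φ ψ : W) : 𝕜 :=
  B (Fin.cons (φ - ψ) fun _ => ψ) - B (Fin.cons (φ - ψ) fun _ => φ)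

/-- The functional `J_ψ(φ) = B(φ-ψ, ψ, …, ψ) - E(φ, ψ)` of a multilinear form, with the energy
`E` written out; for the form of an `MASetup` it is `MASetup.Jfun`. -/
def mongeAmpereJ (B : MultilinearMap 𝕜 (fun _ : Fin (m + 2) => W) 𝕜) (ψ φ : W) : 𝕜 :=
  B (Fin.cons (φ - ψ) fun _ => ψ) - ((m : 𝕜) + 2)⁻¹ *
    ∑ j ∈ range (m + 2), B (Fin.cons (φ - ψ) fun i => if (i : ℕ) < j then φ else ψ)

lemma dirichletForm_apply (B : MultilinearMap 𝕜 (fun _ : Fin (m + 2) => W) 𝕜) (g : Fin m → W)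
    (x y : W) : dirichletForm B g x y = -B (Fin.cons x (Fin.cons y g)) := rfl

lemma dirichletForm_update_sub (B : MultilinearMap 𝕜 (fun _ : Fin (m + 2) => W) 𝕜)
    (g : Fin m → W) (i : Fin m) (a b x y : W) :
    dirichletForm B (update g i (a - b)) x y =
      dirichletForm B (update g i a) x y - dirichletForm B (update g i b) x y := by
  simp only [dirichletForm_apply, Fin.cons_update, B.map_update_sub]
  ring

end DirichletForm

variable {𝕜 : Type*} [Field 𝕜] [LinearOrder 𝕜] {W : Type*} [AddCommGroup W]
  [Module 𝕜 W] {m : ℕ}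

/-- A symmetric multilinear form satisfying the Hodge index inequality `B(u, u, g₁, …, gₘ) ≤ 0`
for `gᵢ ∈ F` and `u` in the span of the differences of elements of `F`. -/
structure IsHodgeIndexForm (B : MultilinearMap 𝕜 (fun _ : Fin (m + 2) => W) 𝕜) (F : Set W) :
    Prop where
  symm : ∀ (v : Fin (m + 2) → W) (σ : Equiv.Perm (Fin (m + 2))), B (v ∘ σ) = B v
  hodge : ∀ u ∈ vectorSpan 𝕜 F, ∀ g : Fin m → W, (∀ i, g i ∈ F) →
    B (Fin.cons u (Fin.cons u g)) ≤ 0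

namespace IsHodgeIndexForm

variable {B : MultilinearMap 𝕜 (fun _ : Fin (m + 2) => W) 𝕜} {F : Set W}

lemma map_cons_comp_swap (hB : IsHodgeIndexForm B F) (x : W) (h : Fin (m + 1) → W)
    (i j : Fin (m + 1)) : B (Fin.cons x (h ∘ Equiv.swap i j)) = B (Fin.cons x h) := by
  rw [← hB.symm (Fin.cons x h) (Equiv.swap i.succ j.succ)]
  exact congrArg B (Matrix.cons_swap x h i j)

lemma dirichletForm_comm (hB : IsHodgeIndexForm B F) (g : Fin m → W) (x y : W) :
    dirichletForm B g x y = dirichletForm B g y x := by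
  rw [dirichletForm_apply, dirichletForm_apply, ← hB.symm _ (Equiv.swap 0 1)]
  exact congrArg (-B ·) (Matrix.cons_cons_comp_swap_zero_one x y g)

lemma dirichletForm_update_comm (hB : IsHodgeIndexForm B F) (g : Fin m → W) (i : Fin m)
    (x y z : W) :
    dirichletForm B (update g i z) x y = dirichletForm B (update g i y) x z := by
  rw [dirichletForm_apply, dirichletForm_apply,
    ← hB.map_cons_comp_swap x (Fin.cons y (update g i z)) 0 i.succ]
  simp [Equiv.comp_swap_eq_update, ← Fin.cons_update]

-- `Fin.tail (h ∘ Equiv.swap 0 i)` lists the entries of `h` other than `h i`.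
lemma map_cons_update (hB : IsHodgeIndexForm B F) (x z : W) (h : Fin (m + 1) → W)
    (i : Fin (m + 1)) :
    B (Fin.cons x (update h i z)) =
      B (Fin.cons x h) + dirichletForm B (Fin.tail (h ∘ Equiv.swap 0 i)) x (h i - z) := by
  have key (w : W) : B (Fin.cons x (update h i w)) =
      -dirichletForm B (Fin.tail (h ∘ Equiv.swap 0 i)) x w := by
    rw [dirichletForm_apply, neg_neg, ← hB.map_cons_comp_swap x (update h i w) 0 i,
      update_comp_equiv, Equiv.symm_swap, Equiv.swap_apply_right,
      ← Fin.cons_self_tail (h ∘ Equiv.swap 0 i), Fin.update_cons_zero, Fin.tail_cons]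
  have hself := key (h i)
  rw [update_eq_self] at hself
  rw [key, hself, map_sub]
  ring

lemma dirichletForm_update_self_eq (hB : IsHodgeIndexForm B F) (φ ψ χ : W) (g : Fin m → W)
    (i : Fin m) :
    dirichletForm B (update g i ψ) (φ - χ) (φ - χ) =
      dirichletForm B (update g i χ) (φ - χ) (φ - χ) +
        dirichletForm B (update g i φ) (φ - χ) (ψ - χ) -
        dirichletForm B (update g i χ) (φ - χ) (ψ - χ) := by
  have hψ := dirichletForm_update_sub B g i ψ χ (φ - χ) (φ - χ)
  have hφ := dirichletForm_update_sub B g i φ χ (φ - χ) (ψ - χ)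
  rw [hB.dirichletForm_update_comm] at hψ
  linear_combination hφ - hψ

variable [IsStrictOrderedRing 𝕜]

lemma dirichletForm_self_nonneg (hB : IsHodgeIndexForm B F) {g : Fin m → W} (hg : ∀ i, g i ∈ F)
    {x : W} (hx : x ∈ vectorSpan 𝕜 F) : 0 ≤ dirichletForm B g x x :=
  neg_nonneg.2 (hB.hodge x hx g hg)

lemma dirichletForm_sq_le (hB : IsHodgeIndexForm B F) {g : Fin m → W} (hg : ∀ i, g i ∈ F)
    {x y : W} (hx : x ∈ vectorSpan 𝕜 F) (hy : y ∈ vectorSpan 𝕜 F) :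
    dirichletForm B g x y ^ 2 ≤ dirichletForm B g x x * dirichletForm B g y y :=
  ((dirichletForm B g).restrict (vectorSpan 𝕜 F)).apply_sq_le_of_symm
    (fun u => hB.dirichletForm_self_nonneg hg u.2) ⟨fun u v => hB.dirichletForm_comm g u v⟩
    ⟨x, hx⟩ ⟨y, hy⟩

lemma dirichletForm_sub_self_le (hB : IsHodgeIndexForm B F) {g : Fin m → W} (hg : ∀ i, g i ∈ F)
    {x y : W} (hx : x ∈ vectorSpan 𝕜 F) (hy : y ∈ vectorSpan 𝕜 F) :
    dirichletForm B g (x - y) (x - y) ≤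
      2 * (dirichletForm B g x x + dirichletForm B g y y) := by
  have hadd := hB.dirichletForm_self_nonneg hg (add_mem hx hy)
  simp only [map_add, map_sub, LinearMap.add_apply, LinearMap.sub_apply] at hadd ⊢
  linarith

lemma const_le_map_cons (hB : IsHodgeIndexForm B F) {φ χ : W} (hφ : φ ∈ F) (hχ : χ ∈ F)
    {h : Fin (m + 1) → W} (hh : ∀ i, h i ∈ ({φ, χ} : Set W)) :
    B (Fin.cons (φ - χ) fun _ => φ) ≤ B (Fin.cons (φ - χ) h) := by
  have hF : ({φ, χ} : Set W) ⊆ F := Set.pair_subset hφ hχ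
  have step : ∀ h : Fin (m + 1) → W, (∀ i, h i ∈ ({φ, χ} : Set W)) → ∀ i,
      B (Fin.cons (φ - χ) (update h i φ)) ≤ B (Fin.cons (φ - χ) h) + 0 := by
    intro h hh i
    have hnonneg := hB.dirichletForm_self_nonneg (g := Fin.tail (h ∘ Equiv.swap 0 i))
      (fun _ => hF (hh _)) (vsub_mem_vectorSpan 𝕜 hφ hχ)
    rw [hB.map_cons_update]
    rcases hh i with hi | hi <;> rw [hi]
    · simp
    · rw [← neg_sub φ χ, map_neg]
      gcongr
      exact neg_nonpos.2 hnonneg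
  simpa using apply_const_le_add_card_nsmul (f := fun h => B (Fin.cons (φ - χ) h))
    (Set.mem_insert φ {χ}) step hh

lemma map_cons_le_const (hB : IsHodgeIndexForm B F) {φ χ : W} (hφ : φ ∈ F) (hχ : χ ∈ F)
    {h : Fin (m + 1) → W} (hh : ∀ i, h i ∈ ({φ, χ} : Set W)) :
    B (Fin.cons (φ - χ) h) ≤ B (Fin.cons (φ - χ) fun _ => χ) := by
  have hneg : ∀ h : Fin (m + 1) → W,
      B (Fin.cons (χ - φ) h) = -B (Fin.cons (φ - χ) h) := fun h => by
    rw [← neg_sub, ← neg_one_smul 𝕜, B.cons_smul, neg_one_smul]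
  have hle := hB.const_le_map_cons hχ hφ (fun i => Set.pair_comm φ χ ▸ hh i)
  rwa [hneg, hneg, neg_le_neg_iff] at hle

lemma dirichletForm_self_le_mongeAmpereI (hB : IsHodgeIndexForm B F) {φ χ : W} (hφ : φ ∈ F)
    (hχ : χ ∈ F) {g : Fin m → W} (hg : ∀ i, g i ∈ ({φ, χ} : Set W)) :
    dirichletForm B g (φ - χ) (φ - χ) ≤ mongeAmpereI B φ χ := by
  have hle := hB.map_cons_le_const hφ hχ (h := Fin.cons χ g)
    (Fin.cons (Set.mem_insert_of_mem φ rfl) hg)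
  have hge := hB.const_le_map_cons hφ hχ (h := Fin.cons φ g)
    (Fin.cons (Set.mem_insert φ {χ}) hg)
  rw [map_sub, dirichletForm_apply, dirichletForm_apply, mongeAmpereI]
  linarith

lemma mongeAmpereI_le_mul_mongeAmpereJ (hB : IsHodgeIndexForm B F) {φ χ : W} (hφ : φ ∈ F)
    (hχ : χ ∈ F) : mongeAmpereI B φ χ ≤ (m + 2) * mongeAmpereJ B χ φ := by
  let D (j : ℕ) : 𝕜 := B (Fin.cons (φ - χ) fun i => if (i : ℕ) < j then φ else χ)
  have hD0 : D 0 = B (Fin.cons (φ - χ) fun _ => χ) := by simp [D]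
  have hDlast : D (m + 1) = B (Fin.cons (φ - χ) fun _ => φ) := by
    simp [D, Fin.is_le]
  have hJ : (m + 2) * mongeAmpereJ B χ φ = ∑ j ∈ range (m + 2), (D 0 - D j) := by
    have hm : (m : 𝕜) + 2 ≠ 0 := by positivity
    rw [sum_sub_distrib, sum_const, card_range, nsmul_eq_mul, hD0, mongeAmpereJ]
    push_cast
    field_simp
    rfl
  have hterm : ∀ j ∈ range (m + 2), 0 ≤ D 0 - D j := fun j _ => by
    rw [sub_nonneg, hD0]
    exact hB.map_cons_le_const hφ hχ fun i => by grind
  rw [hJ, mongeAmpereI, ← hD0, ← hDlast]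
  exact single_le_sum hterm (self_mem_range_succ (m + 1))

lemma mongeAmpereI_le_of_dirichletForm_self_le (hB : IsHodgeIndexForm B F) {φ ψ : W} {Y : 𝕜}
    (hY0 : 0 ≤ Y) (hY : ∀ g : Fin m → W, (∀ i, g i ∈ ({φ, ψ} : Set W)) →
      dirichletForm B g (φ - ψ) (φ - ψ) ≤ Y) :
    mongeAmpereI B φ ψ ≤ (m + 1) * Y := by
  have step : ∀ h : Fin (m + 1) → W, (∀ i, h i ∈ ({φ, ψ} : Set W)) → ∀ i,
      B (Fin.cons (φ - ψ) (update h i ψ)) ≤ B (Fin.cons (φ - ψ) h) + Y := by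
    intro h hh i
    rw [hB.map_cons_update]
    gcongr
    rcases hh i with hi | hi <;> rw [hi]
    · exact hY _ fun _ => hh _
    · simpa using hY0
  have hψ : ψ ∈ ({φ, ψ} : Set W) := Set.mem_insert_of_mem φ rfl
  have hsum := apply_const_le_add_card_nsmul (f := fun h => B (Fin.cons (φ - ψ) h)) hψ step
    fun _ => Set.mem_insert φ {ψ}
  rw [Fintype.card_fin, nsmul_eq_mul] at hsum
  push_cast at hsum
  rw [mongeAmpereI]
  linarith

lemma dirichletForm_update_self_sq_le (hB : IsHodgeIndexForm B F) {φ ψ χ : W} (hφ : φ ∈ F)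
    (hψ : ψ ∈ F) (hχ : χ ∈ F) {g : Fin m → W} (hg : ∀ j, g j ∈ F) (i : Fin m) {P X : 𝕜}
    (hP : ∀ z ∈ ({φ, χ} : Set W), dirichletForm B (update g i z) (φ - χ) (φ - χ) ≤ P)
    (hX : ∀ z ∈ ({φ, χ} : Set W), dirichletForm B (update g i z) (ψ - χ) (ψ - χ) ≤ X)
    (hPX : P ≤ X) :
    dirichletForm B (update g i ψ) (φ - χ) (φ - χ) ^ 2 ≤ 9 * X * P := by
  have hx : φ - χ ∈ vectorSpan 𝕜 F := vsub_mem_vectorSpan 𝕜 hφ hχ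
  have hy : ψ - χ ∈ vectorSpan 𝕜 F := vsub_mem_vectorSpan 𝕜 hψ hχ
  have hmem : ∀ z ∈ ({φ, χ} : Set W), ∀ j, update g i z j ∈ F := fun z hz =>
    (forall_update_iff g fun _ w => w ∈ F).2
      ⟨Set.pair_subset hφ hχ hz, fun j _ => hg j⟩
  have hφmem : φ ∈ ({φ, χ} : Set W) := Set.mem_insert φ {χ}
  have hχmem : χ ∈ ({φ, χ} : Set W) := Set.mem_insert_of_mem φ rfl
  have hP0 : 0 ≤ P := (hB.dirichletForm_self_nonneg (hmem χ hχmem) hx).trans (hP χ hχmem)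
  have hcross : ∀ z ∈ ({φ, χ} : Set W),
      dirichletForm B (update g i z) (φ - χ) (ψ - χ) ^ 2 ≤ P * X := fun z hz =>
    (hB.dirichletForm_sq_le (hmem z hz) hx hy).trans <|
      mul_le_mul (hP z hz) (hX z hz) (hB.dirichletForm_self_nonneg (hmem z hz) hy) hP0
  have hdiag : dirichletForm B (update g i χ) (φ - χ) (φ - χ) ^ 2 ≤ P * X := by
    have hnonneg := hB.dirichletForm_self_nonneg (hmem χ hχmem) hx
    rw [sq]
    exact mul_le_mul (hP χ hχmem) ((hP χ hχmem).trans hPX) hnonneg hP0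
  have sq_add_sub_le (p q r : 𝕜) : (p + q - r) ^ 2 ≤ 3 * (p ^ 2 + q ^ 2 + r ^ 2) := by
    nlinarith [sq_nonneg (p - q), sq_nonneg (p + r), sq_nonneg (q + r)]
  rw [hB.dirichletForm_update_self_eq]
  linarith [sq_add_sub_le (dirichletForm B (update g i χ) (φ - χ) (φ - χ))
    (dirichletForm B (update g i φ) (φ - χ) (ψ - χ))
    (dirichletForm B (update g i χ) (φ - χ) (ψ - χ)), hcross φ hφmem, hcross χ hχmem]

-- `(⟨x, x⟩_g / (9 * X)) ^ 2 ^ #t ≤ M / (9 * X)` for `x = φ - χ`, with the denominators cleared.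
lemma dirichletForm_self_pow_le (hB : IsHodgeIndexForm B F) {φ ψ χ : W} (hφ : φ ∈ F)
    (hψ : ψ ∈ F) (hχ : χ ∈ F) {M X : 𝕜}
    (hM : ∀ g : Fin m → W, (∀ i, g i ∈ ({φ, χ} : Set W)) →
      dirichletForm B g (φ - χ) (φ - χ) ≤ M)
    (hX : ∀ u ∈ ({φ, ψ} : Set W), ∀ g : Fin m → W, (∀ i, g i ∈ ({φ, ψ, χ} : Set W)) →
      dirichletForm B g (u - χ) (u - χ) ≤ X)
    (t : Finset (Fin m)) {g : Fin m → W} (hgt : ∀ i ∈ t, g i = ψ)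
    (hg : ∀ i ∉ t, g i ∈ ({φ, χ} : Set W)) :
    9 * X * dirichletForm B g (φ - χ) (φ - χ) ^ 2 ^ #t ≤ (9 * X) ^ 2 ^ #t * M := by
  have hX0 : 0 ≤ X :=
    (hB.dirichletForm_self_nonneg (fun _ => hχ) (vsub_mem_vectorSpan 𝕜 hφ hχ)).trans
      (hX φ (by simp) (fun _ => χ) (by simp))
  induction t using Finset.induction generalizing g with
  | empty =>
    simp only [card_empty, pow_zero, pow_one]
    gcongr
    exact hM g fun i => hg i (notMem_empty i)
  | insert i t hi ih =>
    have hmem : ∀ z ∈ ({φ, χ} : Set W), ∀ j, update g i z j ∈ ({φ, ψ, χ} : Set W) := by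
      grind
    have hgF : ∀ j, g j ∈ F := by grind
    have hgi : update g i ψ = g := by
      rw [← hgt i (mem_insert_self i t), update_eq_self]
    obtain ⟨w, hw, hwmax⟩ : ∃ w ∈ ({φ, χ} : Set W), ∀ z ∈ ({φ, χ} : Set W),
        dirichletForm B (update g i z) (φ - χ) (φ - χ) ≤
          dirichletForm B (update g i w) (φ - χ) (φ - χ) :=
      Set.exists_max_image _ _ (Set.toFinite _) ⟨φ, Set.mem_insert φ {χ}⟩
    set P := dirichletForm B (update g i w) (φ - χ) (φ - χ)
    have hsq : dirichletForm B g (φ - χ) (φ - χ) ^ 2 ≤ 9 * X * P := by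
      rw [← hgi]
      exact hB.dirichletForm_update_self_sq_le hφ hψ hχ hgF i hwmax
        (fun z hz => hX ψ (by simp) _ (hmem z hz)) (hX φ (by simp) _ (hmem w hw))
    have hP : 9 * X * P ^ 2 ^ #t ≤ (9 * X) ^ 2 ^ #t * M := ih (by grind) (by grind)
    rw [card_insert_of_notMem hi]
    calc 9 * X * dirichletForm B g (φ - χ) (φ - χ) ^ 2 ^ (#t + 1)
        = 9 * X * (dirichletForm B g (φ - χ) (φ - χ) ^ 2) ^ 2 ^ #t := by
          rw [← pow_mul, pow_succ']
      _ ≤ 9 * X * (9 * X * P) ^ 2 ^ #t := by gcongr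
      _ = (9 * X) ^ 2 ^ #t * (9 * X * P ^ 2 ^ #t) := by ring
      _ ≤ (9 * X) ^ 2 ^ #t * ((9 * X) ^ 2 ^ #t * M) := by gcongr
      _ = (9 * X) ^ 2 ^ (#t + 1) * M := by ring

lemma dirichletForm_self_le_of_forall_le (hB : IsHodgeIndexForm B F) {φ ψ χ : W} (hφ : φ ∈ F)
    (hψ : ψ ∈ F) (hχ : χ ∈ F) {M : 𝕜}
    (hM : ∀ g : Fin m → W, (∀ i, g i ∈ ({φ, χ} : Set W)) →
      dirichletForm B g (φ - χ) (φ - χ) ≤ M)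
    {g : Fin m → W} (hg : ∀ i, g i ∈ ({φ, ψ, χ} : Set W))
    (hmax : ∀ u ∈ ({φ, ψ} : Set W), ∀ g' : Fin m → W, (∀ i, g' i ∈ ({φ, ψ, χ} : Set W)) →
      dirichletForm B g' (u - χ) (u - χ) ≤ dirichletForm B g (φ - χ) (φ - χ)) :
    dirichletForm B g (φ - χ) (φ - χ) ≤ 9 ^ 2 ^ m * M := by
  classical
  let t : Finset (Fin m) := {i | g i = ψ}
  have hpow := hB.dirichletForm_self_pow_le hφ hψ hχ hM hmax t (g := g) (by grind) (by grind)
  have hM0 : 0 ≤ M :=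
    (hB.dirichletForm_self_nonneg (fun _ => hχ) (vsub_mem_vectorSpan 𝕜 hφ hχ)).trans
      (hM (fun _ => χ) (by simp))
  set X := dirichletForm B g (φ - χ) (φ - χ)
  rcases le_or_gt X 0 with hX | hX
  · exact hX.trans (by positivity)
  have ht : 9 * X ≤ 9 ^ 2 ^ #t * M := by
    refine le_of_mul_le_mul_right ?_ (pow_pos hX (2 ^ #t))
    calc 9 * X * X ^ 2 ^ #t ≤ (9 * X) ^ 2 ^ #t * M := hpow
      _ = 9 ^ 2 ^ #t * M * X ^ 2 ^ #t := by ring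
  calc X ≤ 9 * X := by linarith
    _ ≤ 9 ^ 2 ^ #t * M := ht
    _ ≤ 9 ^ 2 ^ m * M := by
      gcongr
      · norm_num
      · norm_num
      · exact card_finset_fin_le t

lemma dirichletForm_self_le (hB : IsHodgeIndexForm B F) {φ ψ χ : W} (hφ : φ ∈ F)
    (hψ : ψ ∈ F) (hχ : χ ∈ F) {M : 𝕜}
    (hM : ∀ u ∈ ({φ, ψ} : Set W), ∀ g : Fin m → W, (∀ i, g i ∈ ({u, χ} : Set W)) →
      dirichletForm B g (u - χ) (u - χ) ≤ M)
    {u : W} (hu : u ∈ ({φ, ψ} : Set W)) {g : Fin m → W}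
    (hg : ∀ i, g i ∈ ({φ, ψ, χ} : Set W)) :
    dirichletForm B g (u - χ) (u - χ) ≤ 9 ^ 2 ^ m * M := by
  obtain ⟨⟨v, g₀⟩, ⟨hv, (hg₀ : ∀ i, g₀ i ∈ ({φ, ψ, χ} : Set W))⟩, hmax⟩ := Set.exists_max_image
    (({φ, ψ} : Set W) ×ˢ {g : Fin m → W | ∀ i, g i ∈ ({φ, ψ, χ} : Set W)})
    (fun p => dirichletForm B p.2 (p.1 - χ) (p.1 - χ))
    ((Set.toFinite _).prod (Set.Finite.pi' fun _ => Set.toFinite _)) ⟨(u, g), hu, hg⟩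
  have hmax' : ∀ u ∈ ({φ, ψ} : Set W), ∀ g : Fin m → W, (∀ i, g i ∈ ({φ, ψ, χ} : Set W)) →
      dirichletForm B g (u - χ) (u - χ) ≤ dirichletForm B g₀ (v - χ) (v - χ) :=
    fun u hu g hg => hmax (u, g) ⟨hu, hg⟩
  refine (hmax' u hu g hg).trans ?_
  rcases hv with rfl | rfl
  · exact hB.dirichletForm_self_le_of_forall_le hφ hψ hχ (hM v (by simp)) hg₀ hmax'
  · rw [Set.insert_comm φ v] at hg₀ hmax'
    rw [Set.pair_comm φ v] at hM hmax'
    exact hB.dirichletForm_self_le_of_forall_le hψ hφ hχ (hM v (by simp)) hg₀ hmax'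

end IsHodgeIndexForm

theorem Ifun_le_max_Jfun_general [IsStrictOrderedRing 𝕜]
    {B : MultilinearMap 𝕜 (fun _ : Fin (m + 2) => W) 𝕜} {F : Set W}
    (hB : IsHodgeIndexForm B F) {χ φ ψ : W} (hχ : χ ∈ F) (hφ : φ ∈ F) (hψ : ψ ∈ F) :
    mongeAmpereI B φ ψ ≤
      4 * (m + 1) * (m + 2) * 9 ^ 2 ^ m * max (mongeAmpereJ B χ φ) (mongeAmpereJ B χ ψ) := by
  set N := max (mongeAmpereJ B χ φ) (mongeAmpereJ B χ ψ)
  have hF : ({φ, ψ} : Set W) ⊆ F := Set.pair_subset hφ hψ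
  have hspan : ∀ u ∈ F, u - χ ∈ vectorSpan 𝕜 F := fun u hu => vsub_mem_vectorSpan 𝕜 hu hχ
  have hJ : ∀ u ∈ ({φ, ψ} : Set W), mongeAmpereJ B χ u ≤ N := by
    rintro u (rfl | rfl)
    exacts [le_max_left _ _, le_max_right _ _]
  have hM : ∀ u ∈ ({φ, ψ} : Set W), ∀ g : Fin m → W, (∀ i, g i ∈ ({u, χ} : Set W)) →
      dirichletForm B g (u - χ) (u - χ) ≤ (m + 2) * N := fun u hu g hg =>
    calc dirichletForm B g (u - χ) (u - χ) ≤ mongeAmpereI B u χ :=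
          hB.dirichletForm_self_le_mongeAmpereI (hF hu) hχ hg
      _ ≤ (m + 2) * mongeAmpereJ B χ u := hB.mongeAmpereI_le_mul_mongeAmpereJ (hF hu) hχ
      _ ≤ (m + 2) * N := by gcongr; exact hJ u hu
  have hY : ∀ g : Fin m → W, (∀ i, g i ∈ ({φ, ψ} : Set W)) →
      dirichletForm B g (φ - ψ) (φ - ψ) ≤ 4 * (9 ^ 2 ^ m * ((m + 2) * N)) := fun g hg => by
    have hsub := hB.dirichletForm_sub_self_le (fun i => hF (hg i)) (hspan φ hφ) (hspan ψ hψ)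
    have hg' : ∀ i, g i ∈ ({φ, ψ, χ} : Set W) := by grind
    have hx := hB.dirichletForm_self_le hφ hψ hχ hM (Set.mem_insert φ {ψ}) hg'
    have hy := hB.dirichletForm_self_le hφ hψ hχ hM (Set.mem_insert_of_mem φ rfl) hg'
    rw [sub_sub_sub_cancel_right] at hsub
    linarith
  have hN : 0 ≤ (m + 2) * N :=
    (hB.dirichletForm_self_nonneg (fun _ => hχ) (hspan φ hφ)).trans
      (hM φ (Set.mem_insert φ {ψ}) (fun _ => χ) (by simp))
  calc mongeAmpereI B φ ψ ≤ (m + 1) * (4 * (9 ^ 2 ^ m * ((m + 2) * N))) :=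
        hB.mongeAmpereI_le_of_dirichletForm_self_le (by positivity) hY
    _ = 4 * (m + 1) * (m + 2) * 9 ^ 2 ^ m * N := by ring

end HodgeIndex

lemma MASetup.isHodgeIndexForm {m : ℕ} {W : Type*} [AddCommGroup W] [Module ℝ W]
    (S : MASetup m W) : IsHodgeIndexForm S.B S.F where
  symm := S.symm
  hodge u hu := S.hodge u <| by
    refine Submodule.span_mono ?_ hu
    rintro _ ⟨φ, hφ, ψ, hψ, rfl⟩
    exact Or.inl ⟨φ, hφ, ψ, hψ, rfl⟩

/-- there is `C > 0` depending only on `n = m + 1` such that for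
every setup, every reference `φ_ref ∈ F`, and all `φ, ψ ∈ F`:
`I(φ, ψ) ≤ C max{J(φ), J(ψ)}`, where `J(φ) = J_{φ_ref}(φ)`. -/
theorem Ifun_le_max_Jfun (m : ℕ) :
    ∃ C : ℝ, 0 < C ∧
      ∀ (W : Type*) [AddCommGroup W] [Module ℝ W] (S : MASetup m W),
        ∀ φref ∈ S.F, ∀ φ ∈ S.F, ∀ ψ ∈ S.F,
          S.Ifun φ ψ ≤ C * max (S.Jfun φref φ) (S.Jfun φref ψ) :=
  ⟨4 * (m + 1) * (m + 2) * 9 ^ 2 ^ m, by positivity, fun _ _ _ S _ hχ _ hφ _ hψ =>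
    Ifun_le_max_Jfun_general S.isHodgeIndexForm hχ hφ hψ⟩
end
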